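/- Fix a nonnegative integer u. Let n = n₁·n₂ with n₁, n₂ coprime positive integers, and let k be a divisor of n, written uniquely as k = k₁·k₂ with k₁ | n₁ and k₂ | n₂. Then Y_u[n,k] = Y_u[n₁,k₁]·Y_u[n₂,k₂]. -/

import Mathlib

/-- The Ramanujan sum `c_d(r)`: the sum of the `r`-th powers of all primitive
`d`-th roots of unity. -/
noncomputable def ramanujanSum (d r : ℕ) : ℂ :=
  ∑ m ∈ (Finset.range d).filter (fun m => Nat.gcd m d = 1),
    Complex.exp (2 * Real.pi * Complex.I * ((m : ℂ) * (r : ℂ) / (d : ℂ)))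

/-- `Y_u[n,k] = ∑_{d ∣ n} c_k(n/d) · (c_d(n/d))^u`. -/
noncomputable def Yu (u n k : ℕ) : ℂ :=
  ∑ d ∈ n.divisors, ramanujanSum k (n / d) * (ramanujanSum d (n / d)) ^ u

/-!
The primitive `d * e`-th roots of unity, for coprime `d` and `e`, are uniquely the products of a
primitive `d`-th and a primitive `e`-th root of unity, so `c_{de}(r) = c_d(r) c_e(r)`. Raising to
the `s`-th power permutes the primitive `d`-th roots of unity when `s` is coprime to `d`, so
`c_d(r s) = c_d(r)`. Together these give `c_{de}(r s) = c_d(r) c_e(s)` whenever `d * r` and `e * s`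
are coprime, and the sum over the divisors `a * b` of `n₁ * n₂` factors termwise.
-/

section RootsOfUnity

theorem isPrimitiveRoot_mul_of_coprime {M : Type*} [CommMonoid M] {x y : M} {d e : ℕ}
    (hx : IsPrimitiveRoot x d) (hy : IsPrimitiveRoot y e) (hde : d.Coprime e) :
    IsPrimitiveRoot (x * y) (d * e) := by
  obtain rfl := hx.eq_orderOf
  obtain rfl := hy.eq_orderOf
  rw [← (Commute.all x y).orderOf_mul_eq_mul_orderOf_of_coprime hde]
  exact .orderOf _

theorem isPrimitiveRoot_pow_mul_of_modEq_one {M : Type*} [CommMonoid M] {z : M} {d e a : ℕ}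
    (hz : IsPrimitiveRoot z (e * d)) (hde : 0 < e * d) (ha : e * a ≡ 1 [MOD d]) :
    IsPrimitiveRoot (z ^ (e * a)) d := by
  rw [pow_mul]
  exact (hz.pow hde rfl).pow_of_coprime a
    (Nat.Coprime.coprime_mul_left (ha.gcd_eq.trans d.gcd_one_left))

variable {R A : Type*} [CommRing R] [IsDomain R] [AddCommMonoid A]

theorem sum_coprime_pow_eq_sum_primitiveRoots {n : ℕ} [NeZero n] {ζ : R}
    (hζ : IsPrimitiveRoot ζ n) (f : R → A) :
    ∑ m ∈ (Finset.range n).filter (fun m => m.gcd n = 1), f (ζ ^ m) =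
      ∑ z ∈ primitiveRoots n R, f z := by
  refine Finset.sum_nbij (ζ ^ ·) ?_ ?_ ?_ fun _ _ => rfl
  · intro m hm
    rw [mem_primitiveRoots (NeZero.pos n)]
    exact hζ.pow_of_coprime m (Finset.mem_filter.mp hm).2
  · exact hζ.injOn_pow.mono fun m hm => by simp_all
  · intro z hz
    obtain ⟨m, hm, hmn, rfl⟩ := hζ.isPrimitiveRoot_iff.mp (isPrimitiveRoot_of_mem_primitiveRoots hz)
    exact ⟨m, by simpa using ⟨hm, hmn⟩, rfl⟩

theorem sum_primitiveRoots_pow_of_coprime {n s : ℕ} [NeZero n] (hs : s.Coprime n) (f : R → A) :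
    ∑ z ∈ primitiveRoots n R, f (z ^ s) = ∑ z ∈ primitiveRoots n R, f z := by
  rw [← Finset.sum_coe_sort, ← Finset.sum_coe_sort (primitiveRoots n R) f]
  exact (IsPrimitiveRoot.primitiveRootsPowEquivOfCoprime hs).sum_comp
    fun z : primitiveRoots n R => f z

theorem sum_primitiveRoots_mul {d e : ℕ} [NeZero d] [NeZero e] (hde : d.Coprime e) (f : R → A) :
    ∑ z ∈ primitiveRoots (d * e) R, f z =
      ∑ x ∈ primitiveRoots d R, ∑ y ∈ primitiveRoots e R, f (x * y) := by
  -- By the Chinese remainder theorem, `z ↦ z ^ (e * a)` and `z ↦ z ^ (d * b)` project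
  -- the `d * e`-th roots of unity onto the `d`-th and the `e`-th ones.
  obtain ⟨a, -, ha⟩ : ∃ a < d, e * a ≡ 1 [MOD d] :=
    Nat.exists_mul_mod_eq_of_coprime 1 hde.symm (NeZero.ne d)
  obtain ⟨b, -, hb⟩ : ∃ b < e, d * b ≡ 1 [MOD e] :=
    Nat.exists_mul_mod_eq_of_coprime 1 hde (NeZero.ne e)
  have hab : e * a + d * b ≡ 1 [MOD d * e] := by
    rw [← Nat.modEq_and_modEq_iff_modEq_mul hde]
    exact ⟨by simpa using ha, by simpa using hb⟩
  have pow_split {z : R} (hz : z ^ (d * e) = 1) : z ^ (e * a) * z ^ (d * b) = z := by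
    rw [← pow_add, pow_eq_pow_of_modEq hab hz, pow_one]
  have pow_left {x y : R} (hx : x ^ d = 1) (hy : y ^ e = 1) : (x * y) ^ (e * a) = x := by
    rw [mul_pow, pow_eq_pow_of_modEq ha hx, pow_mul, hy, one_pow, pow_one, mul_one]
  have pow_right {x y : R} (hx : x ^ d = 1) (hy : y ^ e = 1) : (x * y) ^ (d * b) = y := by
    rw [mul_pow, pow_eq_pow_of_modEq hb hy, pow_mul, hx, one_pow, pow_one, one_mul]
  rw [← Finset.sum_product']
  refine Finset.sum_nbij' (fun z => (z ^ (e * a), z ^ (d * b))) (fun p => p.1 * p.2)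
    ?_ ?_ ?_ ?_ ?_ <;> simp only [Finset.mem_product, mem_primitiveRoots, NeZero.pos]
  · exact fun z hz => ⟨isPrimitiveRoot_pow_mul_of_modEq_one (mul_comm d e ▸ hz) (NeZero.pos _) ha,
      isPrimitiveRoot_pow_mul_of_modEq_one hz (NeZero.pos _) hb⟩
  · exact fun p ⟨hx, hy⟩ => isPrimitiveRoot_mul_of_coprime hx hy hde
  · exact fun z hz => pow_split hz.pow_eq_one
  · exact fun p ⟨hx, hy⟩ => Prod.ext (pow_left hx.pow_eq_one hy.pow_eq_one)
      (pow_right hx.pow_eq_one hy.pow_eq_one)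
  · exact fun z hz => congrArg f (pow_split hz.pow_eq_one).symm

end RootsOfUnity

section RamanujanSum

theorem ramanujanSum_eq_sum_primitiveRoots (d r : ℕ) [NeZero d] :
    ramanujanSum d r = ∑ z ∈ primitiveRoots d ℂ, z ^ r := by
  have hζ := Complex.isPrimitiveRoot_exp d (NeZero.ne d)
  rw [ramanujanSum, ← sum_coprime_pow_eq_sum_primitiveRoots hζ]
  refine Finset.sum_congr rfl fun m _ => ?_
  rw [← pow_mul, ← Complex.exp_nat_mul]
  congr 1
  push_cast
  ring

theorem ramanujanSum_mul_left {d e : ℕ} [NeZero d] [NeZero e] (hde : d.Coprime e) (r : ℕ) :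
    ramanujanSum (d * e) r = ramanujanSum d r * ramanujanSum e r := by
  simp only [ramanujanSum_eq_sum_primitiveRoots, sum_primitiveRoots_mul hde, mul_pow,
    Finset.sum_mul_sum]

theorem ramanujanSum_mul_right_of_coprime {d s : ℕ} [NeZero d] (hs : s.Coprime d) (r : ℕ) :
    ramanujanSum d (r * s) = ramanujanSum d r := by
  simp only [ramanujanSum_eq_sum_primitiveRoots, mul_comm r s, pow_mul,
    sum_primitiveRoots_pow_of_coprime hs (· ^ r)]

theorem ramanujanSum_mul_mul {d e r s : ℕ} [NeZero d] [NeZero e] (h : (d * r).Coprime (e * s)) :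
    ramanujanSum (d * e) (r * s) = ramanujanSum d r * ramanujanSum e s := by
  have hde : d.Coprime e := h.coprime_mul_right.coprime_mul_right_right
  have hsd : s.Coprime d := h.coprime_mul_right.coprime_mul_left_right.symm
  have hre : r.Coprime e := h.coprime_mul_left.coprime_mul_right_right
  rw [ramanujanSum_mul_left hde, ramanujanSum_mul_right_of_coprime hsd, mul_comm r s,
    ramanujanSum_mul_right_of_coprime hre]

end RamanujanSum

theorem sum_divisors_mul_of_coprime {A : Type*} [AddCommMonoid A] {m n : ℕ} (hmn : m.Coprime n)
    (f : ℕ → A) :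
    ∑ d ∈ (m * n).divisors, f d = ∑ a ∈ m.divisors, ∑ b ∈ n.divisors, f (a * b) := by
  rw [Nat.divisors_mul, Finset.mul_def, Finset.sum_image hmn.mul_injOn_divisors,
    Finset.sum_product]

theorem stmt_18_general (u : ℕ) {n₁ n₂ k₁ k₂ : ℕ} (hn₁ : n₁ ≠ 0) (hn₂ : n₂ ≠ 0) (hk₁ : k₁ ≠ 0)
    (hk₂ : k₂ ≠ 0) (h : (n₁ * k₁).Coprime (n₂ * k₂)) :
    Yu u (n₁ * n₂) (k₁ * k₂) = Yu u n₁ k₁ * Yu u n₂ k₂ := by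
  have hn : n₁.Coprime n₂ := h.coprime_mul_right.coprime_mul_right_right
  have : NeZero k₁ := ⟨hk₁⟩
  have : NeZero k₂ := ⟨hk₂⟩
  simp only [Yu]
  rw [sum_divisors_mul_of_coprime hn, Finset.sum_mul_sum]
  refine Finset.sum_congr rfl fun a ha => Finset.sum_congr rfl fun b hb => ?_
  obtain ⟨r, rfl⟩ := Nat.dvd_of_mem_divisors ha
  obtain ⟨s, rfl⟩ := Nat.dvd_of_mem_divisors hb
  have : NeZero a := ⟨left_ne_zero_of_mul hn₁⟩
  have : NeZero b := ⟨left_ne_zero_of_mul hn₂⟩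
  have hk : (k₁ * r).Coprime (k₂ * s) := h.of_dvd ⟨a, by ring⟩ ⟨b, by ring⟩
  have hab : (a * r).Coprime (b * s) := h.coprime_mul_right.coprime_mul_right_right
  rw [← Nat.div_mul_div_comm (Nat.dvd_mul_right a r) (Nat.dvd_mul_right b s),
    Nat.mul_div_cancel_left r (NeZero.pos a), Nat.mul_div_cancel_left s (NeZero.pos b),
    ramanujanSum_mul_mul hk, ramanujanSum_mul_mul hab, mul_pow, mul_mul_mul_comm]

theorem stmt_18 (u : ℕ) (n₁ n₂ : ℕ) (h₁ : 0 < n₁) (h₂ : 0 < n₂)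
    (hcop : Nat.Coprime n₁ n₂) (k₁ k₂ : ℕ) (hk₁ : k₁ ∣ n₁) (hk₂ : k₂ ∣ n₂) :
    Yu u (n₁ * n₂) (k₁ * k₂) = Yu u n₁ k₁ * Yu u n₂ k₂ :=
  stmt_18_general u h₁.ne' h₂.ne' (ne_zero_of_dvd_ne_zero h₁.ne' hk₁)
    (ne_zero_of_dvd_ne_zero h₂.ne' hk₂) <|
    Nat.Coprime.of_dvd (mul_dvd_mul_left n₁ hk₁) (mul_dvd_mul_left n₂ hk₂)
      ((hcop.mul_left hcop).mul_right (hcop.mul_left hcop))
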